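/- arXiv:1411.6243 — 2 statements merged into one kernel-verified Lean document; each statement's English description precedes it below -/
import Mathlib

section
/- (Corollary 1: Stability based on removing a full sample.) Under the structure regularization framework, let f^{∖i} be the minimizer of the objective in which all α mini-sample terms derived from the i-th original sample z_i are removed: f^{∖i} := argmin_{g∈F} [(1/(mn)) Σ_{j∉i} L_τ(g, z′_j) + (λ/2)‖g‖₂²]. Assume each L_τ(·, z′_j) is convex and differentiable, the evaluation is ρ-admissible, the point-wise cost is τ-smooth, and feature values are bounded by v. Then for every sample z = (x, y) of structure complexity n (with feature values bounded by v) and every position k, |f(x, k) − f^{∖i}(x, k)| ≤ dτρ²v²n² / (mλα), i.e., the function stability Δ̄ of f compared with f^{∖i} is bounded by α times the bound dτρ²v²n²/(mλα²) of Theorem 2. -/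
open scoped BigOperators

theorem strong_min_aux {F : Type*} [NormedAddCommGroup F] [InnerProductSpace ℝ F]
    (G : F → ℝ) (hG : ConvexOn ℝ Set.univ G) (lam : ℝ) (hlam : 0 < lam) (h : F)
    (hmin : ∀ g, G h + lam / 2 * ‖h‖ ^ 2 ≤ G g + lam / 2 * ‖g‖ ^ 2) (g : F) :
    G h + lam / 2 * ‖h‖ ^ 2 + lam / 2 * ‖g - h‖ ^ 2 ≤ G g + lam / 2 * ‖g‖ ^ 2 := by
  have key : ∀ t : ℝ, 0 < t → t < 1 →
      (1 - t) * (lam / 2 * ‖g - h‖ ^ 2) ≤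
        (G g + lam / 2 * ‖g‖ ^ 2) - (G h + lam / 2 * ‖h‖ ^ 2) := by
    intro t ht0 ht1
    have h1 := hG.2 (Set.mem_univ h) (Set.mem_univ g) (sub_nonneg.2 ht1.le) ht0.le (by ring)
    have h2 := hmin ((1 - t) • h + t • g)
    have h3 : ‖(1 - t) • h + t • g‖ ^ 2 =
        (1 - t) * ‖h‖ ^ 2 + t * ‖g‖ ^ 2 - t * (1 - t) * ‖g - h‖ ^ 2 := by
      rw [norm_add_sq_real, norm_sub_sq_real, norm_smul, norm_smul, inner_smul_left,
        inner_smul_right, mul_pow, mul_pow, Real.norm_eq_abs, Real.norm_eq_abs, sq_abs, sq_abs,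
        real_inner_comm]
      simp
      ring
    rw [h3] at h2
    simp only [smul_eq_mul] at h1
    refine le_of_mul_le_mul_left ?_ ht0
    linarith
  have h0 := hmin g
  by_contra hc
  push Not at hc
  set X := lam / 2 * ‖g - h‖ ^ 2
  set Y := (G g + lam / 2 * ‖g‖ ^ 2) - (G h + lam / 2 * ‖h‖ ^ 2) with hY
  have hXY : Y < X := by linarith
  have hY0 : 0 ≤ Y := by linarith
  have hX : 0 < X := by linarith
  have h4 := key ((X - Y) / (2 * X)) (by apply div_pos <;> linarith)
    (by rw [div_lt_one (by linarith)]; linarith)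
  have h5 : (1 - (X - Y) / (2 * X)) * X = (X + Y) / 2 := by
    field_simp
    ring
  linarith

theorem norm_sum_aux (d t : ℕ) (ht : 0 < t) (v : ℝ) (x : Fin t → EuclideanSpace ℝ (Fin d))
    (hx : ∀ k q, |x k q| ≤ v) : ‖∑ k, x k‖ ≤ t * (Real.sqrt d * v) := by
  have h1 : ∀ k, ‖x k‖ ≤ Real.sqrt d * v := by
    intro k
    rcases Nat.eq_zero_or_pos d with rfl | hd
    · rw [EuclideanSpace.norm_eq]; simp
    have hv : 0 ≤ v := (abs_nonneg _).trans (hx k ⟨0, hd⟩)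
    rw [EuclideanSpace.norm_eq]
    refine Real.sqrt_le_iff.2 ⟨by positivity, ?_⟩
    rw [mul_pow, Real.sq_sqrt (by positivity)]
    calc ∑ q, ‖x k q‖ ^ 2 ≤ ∑ q : Fin d, v ^ 2 := by
          refine Finset.sum_le_sum fun q _ => ?_
          exact pow_le_pow_left₀ (norm_nonneg _) (hx k q) 2
      _ = _ := by simp
  calc ‖∑ k, x k‖ ≤ ∑ k, ‖x k‖ := norm_sum_le _ _
    _ ≤ ∑ k : Fin t, Real.sqrt d * v := Finset.sum_le_sum fun k _ => h1 k
    _ = _ := by simp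

/-- **Corollary 1 (Stability based on removing a full sample).**
Under the structure regularization framework, let `fbar` be the minimizer of
the objective in which all `α` mini-sample terms derived from the `i`-th
original sample are removed.  Then for every sample `(x, y)` of structure
complexity `n` with feature values bounded by `v` and every position `k`,
`|f(x,k) - fbar(x,k)| ≤ d * τ * ρ² * v² * n² / (m * lam * α)`, i.e. `α` times
the bound of Theorem 2. -/
theorem function_stability_full_sample_removal
    {F : Type*} [NormedAddCommGroup F] [InnerProductSpace ℝ F]
    (d m α n n' : ℕ) (hm : 0 < m) (hα : 0 < α) (hn : 0 < n)
    (hdiv : n = α * n')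
    (eval : F → (t : ℕ) → (Fin t → EuclideanSpace ℝ (Fin d)) → Fin t → ℝ)
    (ρ : ℝ) (hρ : 0 ≤ ρ)
    (hadm : ∀ (g g' : F) (t : ℕ) (x : Fin t → EuclideanSpace ℝ (Fin d)) (k : Fin t),
      |eval g t x k - eval g' t x k| ≤ ρ * ‖g - g'‖ * ‖∑ k', x k'‖)
    (cτ : ℝ → ℝ → ℝ) (τ : ℝ)
    (hsmooth : ∀ y₁ y₂ ystar : ℝ, |cτ y₁ ystar - cτ y₂ ystar| ≤ τ * |y₁ - y₂|)
    (hcost_convex : ∀ ystar : ℝ, ConvexOn ℝ Set.univ (fun y : ℝ => cτ y ystar))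
    (v : ℝ)
    (x' : Fin m × Fin α → Fin n' → EuclideanSpace ℝ (Fin d))
    (y' : Fin m × Fin α → Fin n' → ℝ)
    (hval : ∀ (p : Fin m × Fin α) (k : Fin n') (q : Fin d), |x' p k q| ≤ v)
    (hconv : ∀ p : Fin m × Fin α,
      ConvexOn ℝ Set.univ (fun g : F => ∑ k, cτ (eval g n' (x' p) k) (y' p k)))
    (hdiff : ∀ p : Fin m × Fin α,
      Differentiable ℝ (fun g : F => ∑ k, cτ (eval g n' (x' p) k) (y' p k)))
    (lam : ℝ) (hlam : 0 < lam)
    (f : F)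
    (hf : ∀ g : F,
      1 / ((m : ℝ) * n) * ∑ p : Fin m × Fin α, ∑ k, cτ (eval f n' (x' p) k) (y' p k)
          + lam / 2 * ‖f‖ ^ 2
        ≤ 1 / ((m : ℝ) * n) * ∑ p : Fin m × Fin α, ∑ k, cτ (eval g n' (x' p) k) (y' p k)
          + lam / 2 * ‖g‖ ^ 2)
    (i : Fin m) (fbar : F)
    (hfbar : ∀ g : F,
      1 / ((m : ℝ) * n) * ∑ p ∈ Finset.univ.filter (fun p : Fin m × Fin α => p.1 ≠ i),
            ∑ k, cτ (eval fbar n' (x' p) k) (y' p k)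
          + lam / 2 * ‖fbar‖ ^ 2
        ≤ 1 / ((m : ℝ) * n) * ∑ p ∈ Finset.univ.filter (fun p : Fin m × Fin α => p.1 ≠ i),
            ∑ k, cτ (eval g n' (x' p) k) (y' p k)
          + lam / 2 * ‖g‖ ^ 2) :
    ∀ (x : Fin n → EuclideanSpace ℝ (Fin d)),
      (∀ (k : Fin n) (q : Fin d), |x k q| ≤ v) →
      ∀ k : Fin n,
        |eval f n x k - eval fbar n x k|
          ≤ (d : ℝ) * τ * ρ ^ 2 * v ^ 2 * (n : ℝ) ^ 2 / ((m : ℝ) * lam * (α : ℝ)) := by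
  intro x hx k
  have hn' : 0 < n' := by
    rcases Nat.eq_zero_or_pos n' with h | h
    · simp [h] at hdiv; omega
    · exact h
  have hτ : 0 ≤ τ := by
    have := (abs_nonneg _).trans (hsmooth 1 0 0)
    simpa using this
  set L : Fin m × Fin α → F → ℝ := fun p g => ∑ k, cτ (eval g n' (x' p) k) (y' p k) with hL
  set c : ℝ := 1 / ((m : ℝ) * n) with hc
  have hmR : (0 : ℝ) < m := by exact_mod_cast hm
  have hnR : (0 : ℝ) < n := by exact_mod_cast hn
  have hαR : (0 : ℝ) < α := by exact_mod_cast hα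
  have hn'R : (0 : ℝ) < n' := by exact_mod_cast hn'
  have hc0 : 0 < c := by positivity
  have hcv : ∀ s : Finset (Fin m × Fin α),
      ConvexOn ℝ Set.univ (fun g => c * ∑ p ∈ s, L p g) := by
    intro s
    have h1 : ConvexOn ℝ Set.univ (fun g => ∑ p ∈ s, L p g) := by
      refine ⟨convex_univ, fun a _ b _ u w hu hw huw => ?_⟩
      simp only [smul_eq_mul, Finset.mul_sum, ← Finset.sum_add_distrib]
      exact Finset.sum_le_sum fun p _ =>
        (hconv p).2 (Set.mem_univ a) (Set.mem_univ b) hu hw huw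
    exact h1.smul hc0.le
  have e1 := strong_min_aux _ (hcv Finset.univ) lam hlam f hf fbar
  have e2 := strong_min_aux _ (hcv _) lam hlam fbar hfbar f
  rw [← Finset.sum_filter_add_sum_filter_not Finset.univ (fun p : Fin m × Fin α => p.1 ≠ i)
      (fun p => L p f),
    ← Finset.sum_filter_add_sum_filter_not Finset.univ (fun p : Fin m × Fin α => p.1 ≠ i)
      (fun p => L p fbar), norm_sub_rev] at e1
  set B := Finset.univ.filter (fun p : Fin m × Fin α => ¬ p.1 ≠ i) with hB
  set D := ‖f - fbar‖ with hD
  set R := Real.sqrt d * v with hR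
  have hR0 : 0 ≤ R := by
    have := (norm_nonneg _).trans (norm_sum_aux d n hn v x hx)
    exact nonneg_of_mul_nonneg_right this hnR
  have hcard : B.card = α := by
    have : B = ({i} : Finset (Fin m)) ×ˢ (Finset.univ : Finset (Fin α)) := by
      ext p; rw [Finset.mem_product]; simp [hB]
    rw [this]; simp
  have hterm : ∀ p, L p fbar - L p f ≤ n' * (τ * (ρ * D * (n' * R))) := by
    intro p
    simp only [hL, ← Finset.sum_sub_distrib]
    calc _ ≤ ∑ k : Fin n', τ * (ρ * D * (n' * R)) := by
          refine Finset.sum_le_sum fun k _ => ?_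
          refine (le_abs_self _).trans ((hsmooth _ _ _).trans ?_)
          refine mul_le_mul_of_nonneg_left ?_ hτ
          rw [abs_sub_comm]
          refine (hadm _ _ _ _ _).trans ?_
          exact mul_le_mul_of_nonneg_left (norm_sum_aux d n' hn' v _ (hval p)) (by positivity)
      _ = _ := by simp
  have hsum : ∑ p ∈ B, L p fbar - ∑ p ∈ B, L p f ≤ α * (n' * (τ * (ρ * D * (n' * R)))) := by
    rw [← Finset.sum_sub_distrib]
    calc _ ≤ ∑ p ∈ B, (n' : ℝ) * (τ * (ρ * D * (n' * R))) :=
          Finset.sum_le_sum fun p _ => hterm p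
      _ = _ := by simp [hcard]
  have hmain : lam * D ^ 2 ≤ c * (α * (n' * (τ * (ρ * D * (n' * R))))) := by
    have := mul_le_mul_of_nonneg_left hsum hc0.le
    linarith
  have hnn : (n : ℝ) = α * n' := by exact_mod_cast hdiv
  have hcc : c * (α * (n' * (τ * (ρ * D * (n' * R))))) = D * (τ * ρ * n' * R / m) := by
    rw [hc, hnn]; field_simp
  rw [hcc] at hmain
  have hD0 : 0 ≤ D := norm_nonneg _
  have hDb : lam * D ≤ τ * ρ * n' * R / m := by
    rcases hD0.eq_or_lt with h | h
    · rw [← h, mul_zero]; positivity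
    · refine le_of_mul_le_mul_left ?_ h
      linarith
  have hDb2 : D ≤ τ * ρ * n' * R / m / lam := by
    rw [le_div_iff₀ hlam]; linarith
  have hRR : R ^ 2 = d * v ^ 2 := by
    rw [hR, mul_pow, Real.sq_sqrt (by positivity)]
  calc |eval f n x k - eval fbar n x k| ≤ ρ * D * ‖∑ k', x k'‖ := hadm _ _ _ _ _
    _ ≤ ρ * D * (n * R) :=
        mul_le_mul_of_nonneg_left (norm_sum_aux d n hn v x hx) (by positivity)
    _ ≤ ρ * (τ * ρ * n' * R / m / lam) * (n * R) := by gcongr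
    _ = τ * ρ ^ 2 * n' * n * R ^ 2 / (m * lam) := by field_simp
    _ = _ := by rw [hRR, hnn]; field_simp
end

section
/- (Theorem 4: Generalization vs. structure regularization.) Let the learned function f = f_S be the minimizer of the structure-regularized and L₂-weight-regularized objective f := argmin_{g∈F} [(1/(mn)) Σ_{j=1}^{mα} L_τ(g, z′_j) + (λ/2)‖g‖₂²], where the training set S of m samples of structure complexity n is drawn i.i.d. from D and decomposed (by a fixed per-sample map) into mα mini-samples of structure complexity n/α. Assume the point-wise loss ℓ_τ is convex, differentiable in g, built from a τ-smooth cost, satisfies 0 ≤ ℓ_τ(f, z, k) ≤ γ, the evaluation is ρ-admissible, and every feature value is bounded by v. Then for any δ ∈ (0,1), with probability at least 1 − δ over the random draw of S: R(f) ≤ R_e(f) + 2dτ²ρ²v²n²/(mλα) + ( (4m−2)dτ²ρ²v²n²/(mλα) + γ )·√(ln(1/δ)/(2m)). -/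
open MeasureTheory
open scoped BigOperators

/-- The sample-wise loss `L_τ(g, z) = ∑_k c_τ(g(x,k), y_(k))` of `g : F` on a
sample `z = (x, y)` of structure complexity `t`, with feature vectors in
`EuclideanSpace ℝ (Fin d)`, for the evaluation `eval` and point-wise cost `cτ`. -/
noncomputable def srSampleLoss {F : Type*} (d : ℕ)
    (eval : F → (t : ℕ) → (Fin t → EuclideanSpace ℝ (Fin d)) → Fin t → ℝ)
    (cτ : ℝ → ℝ → ℝ) (t : ℕ) (g : F)
    (z : (Fin t → EuclideanSpace ℝ (Fin d)) × (Fin t → ℝ)) : ℝ :=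
  ∑ k, cτ (eval g t z.1 k) (z.2 k)

/-- The generalization risk `R(g) = E_{z∼D}[(1/n) L_τ(g, z)]`. -/
noncomputable def srGenRisk {F : Type*} (d n : ℕ)
    (eval : F → (t : ℕ) → (Fin t → EuclideanSpace ℝ (Fin d)) → Fin t → ℝ)
    (cτ : ℝ → ℝ → ℝ)
    (D : Measure ((Fin n → EuclideanSpace ℝ (Fin d)) × (Fin n → ℝ)))
    (g : F) : ℝ :=
  ∫ z, (1 / (n : ℝ)) * srSampleLoss d eval cτ n g z ∂D

/-- The empirical risk `R_e(g) = (1/(m n)) ∑_{i=1}^m L_τ(g, z_i)` on a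
training set `S` of `m` samples of structure complexity `n`. -/
noncomputable def srEmpRisk {F : Type*} (d n m : ℕ)
    (eval : F → (t : ℕ) → (Fin t → EuclideanSpace ℝ (Fin d)) → Fin t → ℝ)
    (cτ : ℝ → ℝ → ℝ) (g : F)
    (S : Fin m → (Fin n → EuclideanSpace ℝ (Fin d)) × (Fin n → ℝ)) : ℝ :=
  (1 / ((m : ℝ) * n)) * ∑ i, srSampleLoss d eval cτ n g (S i)

/-- The structure-regularized and `L₂`-weight-regularized objective
`g ↦ (1/(mn)) ∑_{j=1}^{mα} L_τ(g, z'_j) + (lam/2)‖g‖²`, where the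
mini-samples `z'_{(i,j)} = φ (S i) j` (of structure complexity `n' = n/α`)
are obtained by the fixed decomposition map `φ` from the training set `S`. -/
noncomputable def srObjective {F : Type*} [NormedAddCommGroup F] (d n n' α m : ℕ)
    (eval : F → (t : ℕ) → (Fin t → EuclideanSpace ℝ (Fin d)) → Fin t → ℝ)
    (cτ : ℝ → ℝ → ℝ) (lam : ℝ)
    (φ : (Fin n → EuclideanSpace ℝ (Fin d)) × (Fin n → ℝ) →
      Fin α → (Fin n' → EuclideanSpace ℝ (Fin d)) × (Fin n' → ℝ))
    (S : Fin m → (Fin n → EuclideanSpace ℝ (Fin d)) × (Fin n → ℝ)) (g : F) : ℝ :=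
  1 / ((m : ℝ) * n) * ∑ i : Fin m, ∑ j : Fin α, srSampleLoss d eval cτ n' g (φ (S i) j)
    + lam / 2 * ‖g‖ ^ 2

/-- The same objective with all `α` mini-sample terms derived from the `i`-th
training sample removed. -/
noncomputable def srObjectiveMinus {F : Type*} [NormedAddCommGroup F] (d n n' α m : ℕ)
    (eval : F → (t : ℕ) → (Fin t → EuclideanSpace ℝ (Fin d)) → Fin t → ℝ)
    (cτ : ℝ → ℝ → ℝ) (lam : ℝ)
    (φ : (Fin n → EuclideanSpace ℝ (Fin d)) × (Fin n → ℝ) →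
      Fin α → (Fin n' → EuclideanSpace ℝ (Fin d)) × (Fin n' → ℝ))
    (S : Fin m → (Fin n → EuclideanSpace ℝ (Fin d)) × (Fin n → ℝ)) (i : Fin m)
    (g : F) : ℝ :=
  1 / ((m : ℝ) * n) *
      ∑ i' ∈ Finset.univ.erase i, ∑ j : Fin α, srSampleLoss d eval cτ n' g (φ (S i') j)
    + lam / 2 * ‖g‖ ^ 2


lemma aux_hoeffding {Z : Type*} [MeasurableSpace Z] (μ : Measure Z) [IsProbabilityMeasure μ]
    (c : ℝ) (hc : 0 ≤ c) (g : Z → ℝ) (hg : Measurable g)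
    (hosc : ∀ z z', |g z - g z'| ≤ c) (t : ℝ) :
    ∫ z, Real.exp (t * (g z - ∫ z, g z ∂μ)) ∂μ ≤ Real.exp (c ^ 2 * t ^ 2 / 8) := by
  have hne : Nonempty Z := nonempty_of_isProbabilityMeasure μ
  obtain ⟨z0⟩ := hne
  have hbdd : BddBelow (Set.range g) := ⟨g z0 - c, by
    rintro _ ⟨z, rfl⟩; have := abs_le.1 (hosc z z0); linarith⟩
  have hmem : ∀ z, g z ∈ Set.Icc (⨅ z, g z) ((⨅ z, g z) + c) := by
    intro z
    have : Nonempty Z := ⟨z0⟩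
    refine ⟨ciInf_le hbdd z, ?_⟩
    have : g z - c ≤ ⨅ z, g z := le_ciInf fun z' => by
      have := abs_le.1 (hosc z z'); linarith
    linarith
  have h := (ProbabilityTheory.hasSubgaussianMGF_of_mem_Icc (μ := μ) hg.aemeasurable
    (Filter.Eventually.of_forall hmem)).mgf_le t
  refine h.trans (le_of_eq ?_)
  congr 1
  simp [abs_of_nonneg hc]
  ring

lemma aux_mcd {Z : Type*} [MeasurableSpace Z] (μ : Measure Z) [IsProbabilityMeasure μ]
    (c : ℝ) (hc : 0 ≤ c) : ∀ (m : ℕ) (Φ : (Fin m → Z) → ℝ), Measurable Φ →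
    ∀ B : ℝ, (∀ S, |Φ S| ≤ B) → (∀ S i z, |Φ (Function.update S i z) - Φ S| ≤ c) → ∀ t : ℝ,
    ∫ S, Real.exp (t * (Φ S - ∫ S, Φ S ∂(Measure.pi fun _ : Fin m => μ)))
      ∂(Measure.pi fun _ : Fin m => μ) ≤ Real.exp (m * (c ^ 2 * t ^ 2 / 8)) := by
  intro m
  induction m with
  | zero =>
    intro Φ hΦ B hB hdiff t
    simp [integral_unique, measureReal_def]
  | succ m ih =>
    intro Φ hΦ B hB hdiff t
    set P := Measure.pi fun _ : Fin m => μ with hP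
    have hmp := (measurePreserving_piFinSuccAbove (fun _ : Fin (m+1) => μ) 0).symm
    have hmeasE : Measurable (fun p : Z × (Fin m → Z) => (Fin.cons p.1 p.2 : Fin (m+1) → Z)) := by
      convert! (MeasurableEquiv.piFinSuccAbove (fun _ : Fin (m+1) => Z) 0).symm.measurable using 1
      ext p; simp [MeasurableEquiv.piFinSuccAbove]
    have htr : ∀ G : (Fin (m+1) → Z) → ℝ, ∫ S, G S ∂(Measure.pi fun _ : Fin (m+1) => μ)
        = ∫ p, G (Fin.cons p.1 p.2) ∂(μ.prod P) := by
      intro G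
      rw [← hmp.integral_comp' G]
      have hE : ∀ p : Z × (Fin m → Z), (MeasurableEquiv.piFinSuccAbove (fun _ => Z) 0).symm p
          = (Fin.cons p.1 p.2 : Fin (m+1) → Z) := fun p => by
        simp [MeasurableEquiv.piFinSuccAbove]
        rfl
      simp only [hE]
      rfl
    have hΨ : Measurable (fun p : Z × (Fin m → Z) => Φ (Fin.cons p.1 p.2)) := hΦ.comp hmeasE
    have hΨi : Integrable (fun p : Z × (Fin m → Z) => Φ (Fin.cons p.1 p.2)) (μ.prod P) :=
      Integrable.of_bound hΨ.aestronglyMeasurable B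
        (Filter.Eventually.of_forall fun p => by simpa using hB _)
    have hΨz : ∀ z, Integrable (fun S => Φ (Fin.cons z S)) P := fun z =>
      Integrable.of_bound (hΨ.comp measurable_prodMk_left).aestronglyMeasurable B
        (Filter.Eventually.of_forall fun p => by simpa using hB _)
    set g : Z → ℝ := fun z => ∫ S, Φ (Fin.cons z S) ∂P with hg
    have hgm : Measurable g :=
      (hΨ.stronglyMeasurable.integral_prod_right').measurable
    have hgosc : ∀ z z', |g z - g z'| ≤ c := by
      intro z z'
      rw [hg]; dsimp only
      rw [← integral_sub (hΨz z) (hΨz z')]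
      have := norm_integral_le_of_norm_le_const (μ := P) (C := c)
        (f := fun S => Φ (Fin.cons z S) - Φ (Fin.cons z' S))
        (Filter.Eventually.of_forall fun S => by
          have := hdiff (Fin.cons z' S) 0 z
          rwa [Fin.update_cons_zero] at this)
      simpa using this
    have hmean : ∫ S, Φ S ∂(Measure.pi fun _ : Fin (m+1) => μ) = ∫ z, g z ∂μ := by
      rw [htr, integral_prod _ hΨi]
    set M := ∫ z, g z ∂μ with hM
    have hgb : ∀ z, |g z| ≤ B := fun z => by
      have := norm_integral_le_of_norm_le_const (μ := P) (C := B)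
        (f := fun S => Φ (Fin.cons z S)) (Filter.Eventually.of_forall fun S => by simpa using hB _)
      simpa using this
    have hMb : |M| ≤ B := by
      have := norm_integral_le_of_norm_le_const (μ := μ) (C := B)
        (f := g) (Filter.Eventually.of_forall fun S => by simpa using hgb _)
      simpa using this
    have hexpb : ∀ x y : ℝ, |x| ≤ B → |y| ≤ B →
        ‖Real.exp (t * (x - y))‖ ≤ Real.exp (|t| * (2 * B)) := by
      intro x y hx hy
      rw [Real.norm_eq_abs, Real.abs_exp]
      apply Real.exp_le_exp.2
      calc t * (x - y) ≤ |t * (x-y)| := le_abs_self _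
        _ = |t| * |x-y| := abs_mul _ _
        _ ≤ _ := by
          gcongr
          exact (abs_sub _ _).trans (by linarith)
    rw [hmean, htr, integral_prod]
    swap
    · refine Integrable.of_bound
        (Real.measurable_exp.comp ((hΨ.sub_const M).const_mul t)).aestronglyMeasurable
        (Real.exp (|t| * (2 * B)))
        (Filter.Eventually.of_forall fun p => hexpb _ _ (hB _) hMb)
    have hinner : ∀ z, ∫ S, Real.exp (t * (Φ (Fin.cons z S) - M)) ∂P
        ≤ Real.exp (t * (g z - M)) * Real.exp (m * (c ^ 2 * t ^ 2 / 8)) := by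
      intro z
      have h1 := ih (fun S => Φ (Fin.cons z S)) (hΨ.comp measurable_prodMk_left) B
        (fun S => hB _) (fun S i z' => by
          have := hdiff (Fin.cons z S) i.succ z'
          rwa [← Fin.cons_update] at this) t
      calc _ = Real.exp (t * (g z - M)) * ∫ S, Real.exp (t * (Φ (Fin.cons z S) - g z)) ∂P := by
            rw [← integral_const_mul]
            congr 1; ext S
            rw [← Real.exp_add]; ring_nf
        _ ≤ _ := by gcongr
    have hgi : Integrable (fun z => Real.exp (t * (g z - M))) μ :=
      Integrable.of_bound (by fun_prop) (Real.exp (|t| * (2 * B)))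
        (Filter.Eventually.of_forall fun p => hexpb _ _ (hgb _) hMb)
    calc _ ≤ ∫ z, Real.exp (t * (g z - M)) * Real.exp (m * (c ^ 2 * t ^ 2 / 8)) ∂μ := by
          apply integral_mono_of_nonneg
          · exact Filter.Eventually.of_forall fun z => integral_nonneg fun S => (Real.exp_pos _).le
          · exact hgi.mul_const _
          · exact Filter.Eventually.of_forall hinner
      _ = (∫ z, Real.exp (t * (g z - M)) ∂μ) * Real.exp (m * (c ^ 2 * t ^ 2 / 8)) := by
          rw [integral_mul_const]
      _ ≤ Real.exp (c ^ 2 * t ^ 2 / 8) * Real.exp (m * (c ^ 2 * t ^ 2 / 8)) := by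
          gcongr
          exact aux_hoeffding μ c hc g hgm hgosc t
      _ = _ := by
          rw [← Real.exp_add]; push_cast; ring_nf

lemma aux_mcd_tail {Z : Type*} [MeasurableSpace Z] (μ : Measure Z) [IsProbabilityMeasure μ]
    (c : ℝ) (hc : 0 < c) (m : ℕ) (hm : 0 < m) (Φ : (Fin m → Z) → ℝ) (hΦ : Measurable Φ)
    (B : ℝ) (hB : ∀ S, |Φ S| ≤ B) (hd : ∀ S i z, |Φ (Function.update S i z) - Φ S| ≤ c)
    (δ : ℝ) (hδ : 0 < δ) (hδ1 : δ < 1) :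
    ENNReal.ofReal (1 - δ) ≤ (Measure.pi fun _ : Fin m => μ)
      {S | Φ S ≤ ∫ S, Φ S ∂(Measure.pi fun _ : Fin m => μ)
        + m * c * Real.sqrt (Real.log δ⁻¹ / (2 * m))} := by
  set P := Measure.pi fun _ : Fin m => μ with hP
  set M := ∫ S, Φ S ∂P with hM
  have hmR : (0:ℝ) < m := by exact_mod_cast hm
  have hlog : 0 < Real.log δ⁻¹ := Real.log_pos ((one_lt_inv₀ hδ).2 hδ1)
  set ε := m * c * Real.sqrt (Real.log δ⁻¹ / (2 * m)) with hε
  have hε0 : 0 ≤ ε := by positivity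
  obtain ⟨C, hC⟩ : ∃ C : NNReal, (C : ℝ) = m * (c ^ 2 / 4) :=
    ⟨⟨m * (c^2 / 4), by positivity⟩, rfl⟩
  have hsub : ProbabilityTheory.HasSubgaussianMGF (fun S => Φ S - M)
      C P := by
    constructor
    · intro t
      refine Integrable.of_bound (by fun_prop) (Real.exp (|t| * (B + |M|)))
        (Filter.Eventually.of_forall fun S => ?_)
      rw [Real.norm_eq_abs, Real.abs_exp]
      apply Real.exp_le_exp.2
      calc t * (Φ S - M) ≤ |t * (Φ S - M)| := le_abs_self _
        _ = |t| * |Φ S - M| := abs_mul _ _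
        _ ≤ _ := by
          gcongr
          exact (abs_sub _ _).trans (by linarith [hB S])
    · intro t
      refine (aux_mcd μ c hc.le m Φ hΦ B hB hd t).trans (le_of_eq ?_)
      congr 1
      rw [hC]
      ring
  have h := hsub.measure_ge_le hε0
  have he : Real.exp (-ε ^ 2 / (2 * (C : ℝ))) = δ := by
    rw [hε, mul_pow, Real.sq_sqrt (by positivity)]
    rw [← Real.exp_log hδ]
    congr 1
    rw [Real.exp_log hδ, Real.log_inv]
    rw [hC]
    field_simp
    ring
  rw [he] at h
  have hms : MeasurableSet {S | ε ≤ Φ S - M} := measurableSet_le measurable_const (by fun_prop)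
  have hcomp : {S | ε ≤ Φ S - M}ᶜ ⊆ {S | Φ S ≤ M + ε} := by
    intro S hS
    simp at hS ⊢
    linarith
  refine le_trans ?_ (measure_mono hcomp)
  rw [← ofReal_measureReal, probReal_compl_eq_one_sub hms]
  exact ENNReal.ofReal_le_ofReal (by linarith)

lemma aux_update {Z : Type*} [MeasurableSpace Z] (μ : Measure Z) [IsProbabilityMeasure μ]
    (m : ℕ) (i : Fin m) :
    MeasurePreserving (fun p : (Fin m → Z) × Z => Function.update p.1 i p.2)
      ((Measure.pi fun _ : Fin m => μ).prod μ) (Measure.pi fun _ : Fin m => μ) := by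
  refine ⟨measurable_update', ?_⟩
  symm
  refine Measure.pi_eq fun s hs => ?_
  rw [Measure.map_apply measurable_update' (MeasurableSet.univ_pi hs)]
  have : (fun p : (Fin m → Z) × Z => Function.update p.1 i p.2) ⁻¹' (Set.univ.pi s)
      = (Set.univ.pi (Function.update s i Set.univ)) ×ˢ s i := by
    ext p
    simp only [Set.mem_preimage, Set.mem_pi, Set.mem_univ, true_imp_iff, Set.mem_prod]
    constructor
    · intro h
      refine ⟨fun j => ?_, by simpa using h i⟩
      by_cases hj : j = i
      · subst hj; simp
      · simpa [hj] using h j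
    · rintro ⟨h1, h2⟩ j
      by_cases hj : j = i
      · subst hj; simpa using h2
      · simpa [hj] using h1 j
  rw [this, Measure.prod_prod, Measure.pi_pi, ← Finset.mul_prod_erase _ _ (Finset.mem_univ i),
    ← Finset.mul_prod_erase _ (fun i => μ (s i)) (Finset.mem_univ i)]
  simp only [Function.update_self, measure_univ, one_mul]
  rw [mul_comm]
  congr 1
  refine Finset.prod_congr rfl fun j hj => ?_
  rw [Function.update_of_ne (Finset.ne_of_mem_erase hj)]

lemma aux_strong {F : Type*} [NormedAddCommGroup F] [InnerProductSpace ℝ F] (h : F → ℝ)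
    (hh : ConvexOn ℝ Set.univ h) (lam : ℝ) (_hlam : 0 < lam) (a : F)
    (ha : ∀ g, h a + lam / 2 * ‖a‖ ^ 2 ≤ h g + lam / 2 * ‖g‖ ^ 2) (b : F) :
    h a + lam / 2 * ‖a‖ ^ 2 + lam / 2 * ‖b - a‖ ^ 2 ≤ h b + lam / 2 * ‖b‖ ^ 2 := by
  have key : ∀ t : ℝ, 0 < t → t < 1 →
      lam / 2 * (1 - t) * ‖b - a‖ ^ 2 ≤ (h b + lam / 2 * ‖b‖ ^ 2) - (h a + lam / 2 * ‖a‖ ^ 2) := by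
    intro t ht ht1
    have h1 := ha ((1 - t) • a + t • b)
    have h2 := hh.2 (Set.mem_univ a) (Set.mem_univ b) (by linarith : 0 ≤ 1 - t) ht.le (by ring)
    have h3 : ‖(1 - t) • a + t • b‖ ^ 2
        = (1 - t) * ‖a‖ ^ 2 + t * ‖b‖ ^ 2 - t * (1 - t) * ‖b - a‖ ^ 2 := by
      rw [norm_add_sq_real, norm_sub_sq_real, norm_smul, norm_smul, real_inner_smul_left,
        real_inner_smul_right, mul_pow, mul_pow, Real.norm_eq_abs, Real.norm_eq_abs, sq_abs, sq_abs,
        real_inner_comm a b]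
      ring
    rw [h3] at h1
    simp only [smul_eq_mul] at h2
    have : t * (lam / 2 * (1 - t) * ‖b - a‖ ^ 2)
      ≤ t * ((h b + lam / 2 * ‖b‖ ^ 2) - (h a + lam / 2 * ‖a‖ ^ 2)) := by nlinarith
    exact le_of_mul_le_mul_left this ht
  by_contra hcon
  push Not at hcon
  set X := lam / 2 * ‖b - a‖ ^ 2 with hX
  set Y := (h b + lam / 2 * ‖b‖ ^ 2) - (h a + lam / 2 * ‖a‖ ^ 2) with hY
  have hXY : Y < X := by linarith
  have hY0 : 0 ≤ Y := by linarith [ha b]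
  have hX0 : 0 < X := by linarith
  have := key ((X - Y) / (2 * X)) (by apply div_pos <;> linarith)
    (by rw [div_lt_one (by linarith)]; linarith)
  have h4 : lam / 2 * (1 - (X - Y) / (2 * X)) * ‖b - a‖ ^ 2 = X - (X - Y) / 2 := by
    calc _ = (1 - (X - Y) / (2 * X)) * X := by rw [hX]; ring
      _ = _ := by field_simp
  linarith

lemma aux_stab {Z : Type*} [MeasurableSpace Z] (D : Measure Z) [IsProbabilityMeasure D]
    (m : ℕ) (hm : 0 < m) (ℓ : (Fin m → Z) → Z → ℝ) (β γ : ℝ) (hβ : 0 ≤ β)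
    (hℓ : ∀ S z, 0 ≤ ℓ S z ∧ ℓ S z ≤ γ) (G : Set Z) (hGm : MeasurableSet G)
    (hG : ∀ᵐ z ∂D, z ∈ G)
    (hstab : ∀ S i z w, (∀ j, S j ∈ G) → z ∈ G → w ∈ G →
      |ℓ (Function.update S i z) w - ℓ S w| ≤ 2 * β)
    (hI1 : Integrable (fun p : (Fin m → Z) × Z => ℓ p.1 p.2)
      ((Measure.pi fun _ : Fin m => D).prod D))
    (hI2 : ∀ i, Integrable (fun p : (Fin m → Z) × Z => ℓ (Function.update p.1 i p.2) p.2)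
      ((Measure.pi fun _ : Fin m => D).prod D))
    (hI3 : ∀ i, Integrable (fun S : Fin m → Z => ℓ S (S i)) (Measure.pi fun _ : Fin m => D))
    (hIG : ∀ S, Integrable (ℓ S) D)
    (hmeas : Measurable fun S => ∫ z, ℓ S z ∂D - (1 / (m : ℝ)) * ∑ i, ℓ S (S i))
    (δ : ℝ) (hδ : 0 < δ) (hδ1 : δ < 1) :
    ENNReal.ofReal (1 - δ) ≤ (Measure.pi fun _ : Fin m => D)
      {S | ∫ z, ℓ S z ∂D - (1 / (m : ℝ)) * ∑ i, ℓ S (S i) ≤ 2 * β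
        + ((4 * m - 2) * β + γ) * Real.sqrt (Real.log δ⁻¹ / (2 * m))} := by
  set P := Measure.pi fun _ : Fin m => D with hP
  set Φ : (Fin m → Z) → ℝ := fun S => ∫ z, ℓ S z ∂D - (1 / (m : ℝ)) * ∑ i, ℓ S (S i) with hΦ
  have hmR : (1:ℝ) ≤ m := by exact_mod_cast hm
  have hm0 : (m:ℝ) ≠ 0 := by positivity
  obtain ⟨z0, hz0⟩ : ∃ z, z ∈ G := hG.exists
  have hγ0 : 0 ≤ γ := (hℓ (fun _ => z0) z0).1.trans (hℓ (fun _ => z0) z0).2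
  have hR : ∀ S, 0 ≤ ∫ z, ℓ S z ∂D ∧ ∫ z, ℓ S z ∂D ≤ γ := by
    intro S
    refine ⟨integral_nonneg fun z => (hℓ S z).1, ?_⟩
    calc _ ≤ ∫ z, γ ∂D := integral_mono (hIG S) (integrable_const _) fun z => (hℓ S z).2
      _ = γ := by simp
  have hE : ∀ S, 0 ≤ (1 / (m : ℝ)) * ∑ i, ℓ S (S i) ∧ (1 / (m : ℝ)) * ∑ i, ℓ S (S i) ≤ γ := by
    intro S
    refine ⟨mul_nonneg (by positivity) (Finset.sum_nonneg fun i _ => (hℓ S _).1), ?_⟩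
    calc _ ≤ (1 / (m : ℝ)) * ∑ i : Fin m, γ := by
          gcongr with i; exact (hℓ S _).2
      _ = γ := by simp; field_simp
  have hΦb : ∀ S, |Φ S| ≤ γ := by
    intro S
    have h1 := hR S
    have h2 := hE S
    rw [abs_le]; constructor <;> simp only [hΦ] <;> linarith [h1.1, h1.2, h2.1, h2.2]
  rcases hγ0.eq_or_lt with hγ | hγ
  · have : ({S | Φ S ≤ 2 * β + ((4 * m - 2) * β + γ) * Real.sqrt (Real.log δ⁻¹ / (2 * m))} : Set (Fin m → Z)) = Set.univ := by
      refine Set.eq_univ_of_forall fun S => ?_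
      have h1 := (abs_le.1 (hΦb S)).2
      have : 0 ≤ ((4 * m - 2) * β + γ) * Real.sqrt (Real.log δ⁻¹ / (2 * m)) :=
        mul_nonneg (add_nonneg (mul_nonneg (by linarith) hβ) hγ0) (Real.sqrt_nonneg _)
      simp only [Set.mem_ofPred_eq]
      linarith
    rw [this, measure_univ]
    exact ENNReal.ofReal_le_one.2 (by linarith)
  -- bounded differences
  set c : ℝ := ((4 * m - 2) * β + γ) / m with hc
  have hc0 : 0 < c := div_pos (add_pos_of_nonneg_of_pos (mul_nonneg (by linarith) hβ) hγ) (by linarith)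
  have hbd : ∀ S i z, (∀ j, S j ∈ G) → z ∈ G → |Φ (Function.update S i z) - Φ S| ≤ c := by
    intro S i z hS hz
    have h1 : |∫ w, ℓ (Function.update S i z) w ∂D - ∫ w, ℓ S w ∂D| ≤ 2 * β := by
      rw [← integral_sub (hIG _) (hIG _)]
      have := norm_integral_le_of_norm_le_const (μ := D) (C := 2 * β)
        (f := fun w => ℓ (Function.update S i z) w - ℓ S w)
        (by filter_upwards [hG] with w hw using hstab S i z w hS hz hw)
      simpa using this
    have h2 : |∑ j, ℓ (Function.update S i z) (Function.update S i z j) - ∑ j, ℓ S (S j)|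
        ≤ γ + (m - 1) * (2 * β) := by
      rw [← Finset.sum_sub_distrib, ← Finset.add_sum_erase _ _ (Finset.mem_univ i)]
      refine (abs_add_le _ _).trans (add_le_add ?_ ?_)
      · have h3 := hℓ (Function.update S i z) (Function.update S i z i)
        have h4 := hℓ S (S i)
        rw [abs_le]; constructor <;> linarith [h3.1, h3.2, h4.1, h4.2]
      · refine (Finset.abs_sum_le_sum_abs _ _).trans ?_
        calc _ ≤ ∑ j ∈ Finset.univ.erase i, 2 * β := by
              refine Finset.sum_le_sum fun j hj => ?_
              rw [Function.update_of_ne (Finset.ne_of_mem_erase hj)]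
              exact hstab S i z _ hS hz (hS j)
          _ = _ := by
              rw [Finset.sum_const, Finset.card_erase_of_mem (Finset.mem_univ i)]
              simp [Nat.cast_sub (Nat.succ_le_of_lt hm)]
    have h3 : Φ (Function.update S i z) - Φ S
      = (∫ w, ℓ (Function.update S i z) w ∂D - ∫ w, ℓ S w ∂D) - (1 / (m:ℝ)) *
        (∑ j, ℓ (Function.update S i z) (Function.update S i z j) - ∑ j, ℓ S (S j)) := by
      simp only [hΦ]; ring
    rw [h3]
    refine (abs_sub _ _).trans ?_
    rw [abs_mul, abs_of_nonneg (by positivity : (0:ℝ) ≤ 1 / m)]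
    calc _ ≤ 2 * β + 1 / (m:ℝ) * (γ + (m - 1) * (2 * β)) := by gcongr
      _ = c := by rw [hc]; field_simp; ring
  -- retraction
  classical
  set r : Z → Z := fun z => if z ∈ G then z else z0 with hr
  have hrm : Measurable r := Measurable.ite hGm measurable_id measurable_const
  have hrG : ∀ z, r z ∈ G := fun z => by
    by_cases h : z ∈ G <;> simp [hr, h, hz0]
  have hGS : ∀ᵐ S ∂P, ∀ j, S j ∈ G := by
    rw [ae_all_iff]
    intro j
    exact (measurePreserving_eval (fun _ : Fin m => D) j).quasiMeasurePreserving.ae hG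
  have hae : (fun S => Φ (fun j => r (S j))) =ᵐ[P] Φ := by
    filter_upwards [hGS] with S hS
    congr 1
    ext j; simp [hr, hS j]
  have hrSm : Measurable (fun (S : Fin m → Z) j => r (S j)) := by fun_prop
  have htail := aux_mcd_tail D c hc0 m hm (fun S => Φ (fun j => r (S j))) (hmeas.comp hrSm) γ
    (fun S => hΦb _) (fun S i z => by
      have : (fun j => r (Function.update S i z j)) = Function.update (fun j => r (S j)) i (r z) := by
        ext j
        by_cases hj : j = i
        · subst hj; simp
        · simp [hj]
      rw [this]
      exact hbd _ _ _ (fun j => hrG _) (hrG _)) δ hδ hδ1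
  rw [← hP, integral_congr_ae hae] at htail
  -- expectation
  have hmean : ∫ S, Φ S ∂P ≤ 2 * β := by
    have hIR : Integrable (fun S => ∫ z, ℓ S z ∂D) P := hI1.integral_prod_left
    have e1 : ∫ S, (∫ z, ℓ S z ∂D) ∂P = ∫ p, ℓ p.1 p.2 ∂(P.prod D) := (integral_prod _ hI1).symm
    have e2 : ∀ i, ∫ S, ℓ S (S i) ∂P
        = ∫ p, ℓ (Function.update p.1 i p.2) p.2 ∂(P.prod D) := by
      intro i
      have hu := aux_update D m i
      have hs : AEStronglyMeasurable (fun S : Fin m → Z => ℓ S (S i))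
          (Measure.map (fun p : (Fin m → Z) × Z => Function.update p.1 i p.2) (P.prod D)) := by
        rw [hu.map_eq]; exact (hI3 i).aestronglyMeasurable
      have := integral_map hu.measurable.aemeasurable hs
      rw [hu.map_eq] at this
      rw [← hP] at this
      rw [this]
      simp
    have hGp : ∀ᵐ p ∂(P.prod D), (∀ j, p.1 j ∈ G) ∧ p.2 ∈ G := by
      have a1 := (Measure.quasiMeasurePreserving_fst (μ := P) (ν := D)).ae hGS
      have a2 := (Measure.quasiMeasurePreserving_snd (μ := P) (ν := D)).ae hG
      filter_upwards [a1, a2] with p h1 h2 using ⟨h1, h2⟩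
    have e3 : ∀ i, ∫ p, ℓ p.1 p.2 ∂(P.prod D) - ∫ S, ℓ S (S i) ∂P ≤ 2 * β := by
      intro i
      rw [e2, ← integral_sub hI1 (hI2 i)]
      have := norm_integral_le_of_norm_le_const (μ := P.prod D) (C := 2 * β)
        (f := fun p => ℓ p.1 p.2 - ℓ (Function.update p.1 i p.2) p.2)
        (by
          filter_upwards [hGp] with p hp
          rw [Real.norm_eq_abs, abs_sub_comm]
          exact hstab p.1 i p.2 p.2 hp.1 hp.2 hp.2)
      refine (le_abs_self _).trans ?_
      simpa using this
    have e4 : ∫ S, Φ S ∂P = ∫ p, ℓ p.1 p.2 ∂(P.prod D) - (1 / (m:ℝ)) * ∑ i, ∫ S, ℓ S (S i) ∂P := by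
      simp only [hΦ]
      rw [integral_sub hIR ((integrable_finsetSum _ fun i _ => hI3 i).const_mul _), e1,
        integral_const_mul, integral_finsetSum _ fun i _ => hI3 i]
    have e5 : ∑ i : Fin m, (∫ p, ℓ p.1 p.2 ∂(P.prod D) - ∫ S, ℓ S (S i) ∂P) ≤ ∑ i : Fin m, 2 * β :=
      Finset.sum_le_sum fun i _ => e3 i
    rw [Finset.sum_sub_distrib] at e5
    simp only [Finset.sum_const, Finset.card_univ, Fintype.card_fin, nsmul_eq_mul] at e5
    rw [e4]
    have : (m:ℝ) * (∫ p, ℓ p.1 p.2 ∂(P.prod D) - (1 / (m:ℝ)) * ∑ i, ∫ S, ℓ S (S i) ∂P)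
        ≤ m * (2 * β) := by
      refine le_trans (le_of_eq ?_) e5
      field_simp
    exact le_of_mul_le_mul_left this (by linarith)
  refine htail.trans (measure_mono_ae ?_)
  filter_upwards [hae] with S hS h
  have hmc : m * c = (4 * m - 2) * β + γ := by rw [hc]; field_simp
  change Φ (fun j => r (S j)) ≤ _ at h
  change Φ S ≤ _
  have hS' : Φ (fun j => r (S j)) = Φ S := hS
  rw [hS', hmc] at h
  linarith

lemma aux_norm (d t : ℕ) (v : ℝ) (x : Fin t → EuclideanSpace ℝ (Fin d))
    (hx : ∀ k q, |x k q| ≤ v) : ‖∑ k, x k‖ ≤ t * (Real.sqrt d * |v|) := by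
  have h1 : ∀ k, ‖x k‖ ≤ Real.sqrt d * |v| := by
    intro k
    rw [EuclideanSpace.norm_eq, ← Real.sqrt_sq_eq_abs, ← Real.sqrt_mul (by positivity)]
    apply Real.sqrt_le_sqrt
    calc ∑ q, ‖x k q‖ ^ 2 ≤ ∑ q : Fin d, v ^ 2 := by
          refine Finset.sum_le_sum fun q _ => ?_
          exact pow_le_pow_left₀ (norm_nonneg _) (hx k q) 2
      _ = _ := by simp
  calc _ ≤ ∑ k, ‖x k‖ := norm_sum_le _ _
    _ ≤ ∑ k : Fin t, Real.sqrt d * |v| := Finset.sum_le_sum fun k _ => h1 k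
    _ = _ := by simp

lemma aux_lip {F : Type*} [NormedAddCommGroup F] (d : ℕ)
    (eval : F → (t : ℕ) → (Fin t → EuclideanSpace ℝ (Fin d)) → Fin t → ℝ)
    (ρ τ v : ℝ) (hρ : 0 ≤ ρ) (hτ : 0 ≤ τ)
    (hadm : ∀ (g g' : F) (t : ℕ) (x : Fin t → EuclideanSpace ℝ (Fin d)) (k : Fin t),
      |eval g t x k - eval g' t x k| ≤ ρ * ‖g - g'‖ * ‖∑ k', x k'‖)
    (cτ : ℝ → ℝ → ℝ)
    (hsmooth : ∀ y₁ y₂ ystar : ℝ, |cτ y₁ ystar - cτ y₂ ystar| ≤ τ * |y₁ - y₂|)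
    (t : ℕ) (z : (Fin t → EuclideanSpace ℝ (Fin d)) × (Fin t → ℝ))
    (hz : ∀ k q, |z.1 k q| ≤ v) (g g' : F) :
    |srSampleLoss d eval cτ t g z - srSampleLoss d eval cτ t g' z|
      ≤ t * (τ * (ρ * ‖g - g'‖ * (t * (Real.sqrt d * |v|)))) := by
  unfold srSampleLoss
  rw [← Finset.sum_sub_distrib]
  refine (Finset.abs_sum_le_sum_abs _ _).trans ?_
  calc _ ≤ ∑ k : Fin t, τ * (ρ * ‖g - g'‖ * (t * (Real.sqrt d * |v|))) := by
        refine Finset.sum_le_sum fun k _ => (hsmooth _ _ _).trans ?_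
        gcongr
        refine (hadm g g' t z.1 k).trans ?_
        gcongr
        exact aux_norm d t v z.1 hz
    _ = _ := by simp

lemma aux_convex_sum {F ι : Type*} [NormedAddCommGroup F] [InnerProductSpace ℝ F]
    (s : Finset ι) (h : ι → F → ℝ) (hh : ∀ i, ConvexOn ℝ Set.univ (h i)) :
    ConvexOn ℝ Set.univ (fun g => ∑ i ∈ s, h i g) := by
  classical
  induction s using Finset.induction_on with
  | empty => simpa using convexOn_const (0 : ℝ) (convex_univ (𝕜 := ℝ) (E := F))
  | insert a s ha ih =>
    simp only [Finset.sum_insert ha]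
    exact (hh a).add ih

/-- **Theorem 4 (Generalization vs. structure regularization).**
Let `f S` be a minimizer of the structure-regularized and `L₂`-weight-
regularized objective built from the training set `S` of `m` i.i.d. samples of
structure complexity `n = α n'`, each decomposed by the fixed map `φ` into `α`
mini-samples of structure complexity `n'`, so that the induced learning
algorithm `S ↦ f S` is symmetric (and `fminus S i` is a minimizer of the
objective with all mini-samples of the `i`-th sample removed).  Assume the
sample-wise losses are convex and differentiable in `g`, the point-wise cost
is convex and `τ`-smooth with `0 ≤ ℓ_τ(f S, z, k) ≤ γ`, the evaluation is
`ρ`-admissible, and every feature value is bounded by `v` (`D`-almost surely,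
and preserved by the decomposition `φ`).  Then for any `δ ∈ (0,1)`, with
probability at least `1 − δ` over the random draw of `S`,
`R(f) ≤ R_e(f) + 2dτ²ρ²v²n²/(mλα)
  + ((4m−2)dτ²ρ²v²n²/(mλα) + γ)√(ln(1/δ)/(2m))`. -/
theorem generalization_vs_structure_regularization
    {F : Type*} [NormedAddCommGroup F] [InnerProductSpace ℝ F]
    (d m α n n' : ℕ) (hm : 0 < m) (hα : 0 < α) (hn : 0 < n)
    (hdiv : n = α * n')
    (eval : F → (t : ℕ) → (Fin t → EuclideanSpace ℝ (Fin d)) → Fin t → ℝ)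
    (ρ τ v γ lam : ℝ) (hρ : 0 ≤ ρ) (hlam : 0 < lam)
    (hadm : ∀ (g g' : F) (t : ℕ) (x : Fin t → EuclideanSpace ℝ (Fin d)) (k : Fin t),
      |eval g t x k - eval g' t x k| ≤ ρ * ‖g - g'‖ * ‖∑ k', x k'‖)
    (cτ : ℝ → ℝ → ℝ)
    (hsmooth : ∀ y₁ y₂ ystar : ℝ, |cτ y₁ ystar - cτ y₂ ystar| ≤ τ * |y₁ - y₂|)
    (hcost_convex : ∀ ystar : ℝ, ConvexOn ℝ Set.univ (fun y : ℝ => cτ y ystar))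
    (hconv : ∀ z' : (Fin n' → EuclideanSpace ℝ (Fin d)) × (Fin n' → ℝ),
      ConvexOn ℝ Set.univ (fun g : F => srSampleLoss d eval cτ n' g z'))
    (hdiff : ∀ z' : (Fin n' → EuclideanSpace ℝ (Fin d)) × (Fin n' → ℝ),
      Differentiable ℝ (fun g : F => srSampleLoss d eval cτ n' g z'))
    (D : Measure ((Fin n → EuclideanSpace ℝ (Fin d)) × (Fin n → ℝ)))
    [IsProbabilityMeasure D]
    (φ : (Fin n → EuclideanSpace ℝ (Fin d)) × (Fin n → ℝ) →
      Fin α → (Fin n' → EuclideanSpace ℝ (Fin d)) × (Fin n' → ℝ))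
    (f : (Fin m → (Fin n → EuclideanSpace ℝ (Fin d)) × (Fin n → ℝ)) → F)
    (hf : ∀ (S : Fin m → (Fin n → EuclideanSpace ℝ (Fin d)) × (Fin n → ℝ)) (g : F),
      srObjective d n n' α m eval cτ lam φ S (f S)
        ≤ srObjective d n n' α m eval cτ lam φ S g)
    (hsym : ∀ (S : Fin m → (Fin n → EuclideanSpace ℝ (Fin d)) × (Fin n → ℝ))
      (σ : Equiv.Perm (Fin m)), f (S ∘ σ) = f S)
    (fminus : (Fin m → (Fin n → EuclideanSpace ℝ (Fin d)) × (Fin n → ℝ)) → Fin m → F)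
    (hfminus : ∀ (S : Fin m → (Fin n → EuclideanSpace ℝ (Fin d)) × (Fin n → ℝ))
      (i : Fin m) (g : F),
      srObjectiveMinus d n n' α m eval cτ lam φ S i (fminus S i)
        ≤ srObjectiveMinus d n n' α m eval cτ lam φ S i g)
    (hconsist : ∀ (S : Fin m → (Fin n → EuclideanSpace ℝ (Fin d)) × (Fin n → ℝ))
      (i : Fin m) (z : (Fin n → EuclideanSpace ℝ (Fin d)) × (Fin n → ℝ)),
      fminus (Function.update S i z) i = fminus S i)
    (hboundD : ∀ᵐ z ∂D, ∀ (k : Fin n) (q : Fin d), |z.1 k q| ≤ v)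
    (hφbound : ∀ z : (Fin n → EuclideanSpace ℝ (Fin d)) × (Fin n → ℝ),
      (∀ (k : Fin n) (q : Fin d), |z.1 k q| ≤ v) →
      ∀ (j : Fin α) (k : Fin n') (q : Fin d), |(φ z j).1 k q| ≤ v)
    (hγ : ∀ (S : Fin m → (Fin n → EuclideanSpace ℝ (Fin d)) × (Fin n → ℝ))
      (z : (Fin n → EuclideanSpace ℝ (Fin d)) × (Fin n → ℝ)) (k : Fin n),
      0 ≤ cτ (eval (f S) n z.1 k) (z.2 k) ∧ cτ (eval (f S) n z.1 k) (z.2 k) ≤ γ)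
    (hInt1 : Integrable
      (fun p : (Fin m → (Fin n → EuclideanSpace ℝ (Fin d)) × (Fin n → ℝ)) ×
          ((Fin n → EuclideanSpace ℝ (Fin d)) × (Fin n → ℝ)) =>
        srSampleLoss d eval cτ n (f p.1) p.2)
      ((Measure.pi fun _ : Fin m => D).prod D))
    (hInt2 : ∀ i : Fin m, Integrable
      (fun p : (Fin m → (Fin n → EuclideanSpace ℝ (Fin d)) × (Fin n → ℝ)) ×
          ((Fin n → EuclideanSpace ℝ (Fin d)) × (Fin n → ℝ)) =>
        srSampleLoss d eval cτ n (f (Function.update p.1 i p.2)) p.2)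
      ((Measure.pi fun _ : Fin m => D).prod D))
    (hInt3 : ∀ j : Fin m, Integrable
      (fun S : Fin m → (Fin n → EuclideanSpace ℝ (Fin d)) × (Fin n → ℝ) =>
        srSampleLoss d eval cτ n (f S) (S j))
      (Measure.pi fun _ : Fin m => D))
    (hIntR : Integrable
      (fun S : Fin m → (Fin n → EuclideanSpace ℝ (Fin d)) × (Fin n → ℝ) =>
        srGenRisk d n eval cτ D (f S))
      (Measure.pi fun _ : Fin m => D))
    (hIntG : ∀ S : Fin m → (Fin n → EuclideanSpace ℝ (Fin d)) × (Fin n → ℝ),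
      Integrable (fun z => srSampleLoss d eval cτ n (f S) z) D)
    (hIntGm : ∀ (S : Fin m → (Fin n → EuclideanSpace ℝ (Fin d)) × (Fin n → ℝ))
      (i : Fin m),
      Integrable (fun z => srSampleLoss d eval cτ n (fminus S i) z) D)
    (hmeas : Measurable
      (fun S : Fin m → (Fin n → EuclideanSpace ℝ (Fin d)) × (Fin n → ℝ) =>
        srGenRisk d n eval cτ D (f S) - srEmpRisk d n m eval cτ (f S) S)) :
    ∀ δ : ℝ, δ ∈ Set.Ioo (0 : ℝ) 1 →
      ENNReal.ofReal (1 - δ) ≤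
        (Measure.pi fun _ : Fin m => D)
          {S | srGenRisk d n eval cτ D (f S)
            ≤ srEmpRisk d n m eval cτ (f S) S
              + 2 * (d : ℝ) * τ ^ 2 * ρ ^ 2 * v ^ 2 * (n : ℝ) ^ 2 / ((m : ℝ) * lam * (α : ℝ))
              + ((4 * (m : ℝ) - 2) * (d : ℝ) * τ ^ 2 * ρ ^ 2 * v ^ 2 * (n : ℝ) ^ 2
                    / ((m : ℝ) * lam * (α : ℝ)) + γ)
                * Real.sqrt (Real.log δ⁻¹ / (2 * (m : ℝ)))} := by
  intro δ hδ
  have hτ : 0 ≤ τ := by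
    have := (abs_nonneg _).trans (hsmooth 0 1 0)
    simpa using this
  have hmR : (0:ℝ) < m := by exact_mod_cast hm
  have hαR : (0:ℝ) < α := by exact_mod_cast hα
  have hnR : (0:ℝ) < n := by exact_mod_cast hn
  have hnn : (n:ℝ) = α * n' := by rw [hdiv]; push_cast; ring
  have hn'R : (0:ℝ) < n' := by
    rcases (Nat.cast_nonneg n' : (0:ℝ) ≤ n').eq_or_lt with h | h
    · rw [← h, mul_zero] at hnn; linarith
    · exact h
  set w : ℝ := Real.sqrt d * |v| with hw
  have hw0 : 0 ≤ w := by positivity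
  have hw2 : w ^ 2 = d * v ^ 2 := by
    rw [hw, mul_pow, Real.sq_sqrt (by positivity), sq_abs]
  set G : Set ((Fin n → EuclideanSpace ℝ (Fin d)) × (Fin n → ℝ)) :=
    {z | ∀ (k : Fin n) (q : Fin d), |z.1 k q| ≤ v} with hGdef
  have hGm : MeasurableSet G := by
    have : G = ⋂ (k : Fin n), ⋂ (q : Fin d), {z | |z.1 k q| ≤ v} := by
      ext z; simp [hGdef]
    rw [this]
    refine MeasurableSet.iInter fun k => MeasurableSet.iInter fun q => ?_
    refine measurableSet_le ?_ measurable_const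
    fun_prop
  -- distance of the minimizers
  have hdist : ∀ (S : Fin m → (Fin n → EuclideanSpace ℝ (Fin d)) × (Fin n → ℝ)) (i : Fin m),
      S i ∈ G → ‖f S - fminus S i‖ ≤ τ * ρ * w * n' / (m * lam) := by
    intro S i hSi
    set h : Fin m → F → ℝ := fun i' g => ∑ j : Fin α, srSampleLoss d eval cτ n' g (φ (S i') j)
      with hh
    have hhc : ∀ i', ConvexOn ℝ Set.univ (h i') := fun i' => by
      exact aux_convex_sum _ _ fun j => hconv (φ (S i') j)
    have hcoef : (0:ℝ) ≤ 1 / ((m : ℝ) * n) := by positivity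
    have hsum : ∀ s : Finset (Fin m),
        ConvexOn ℝ Set.univ (fun g => 1 / ((m : ℝ) * n) * ∑ i' ∈ s, h i' g) := fun s => by
      exact (aux_convex_sum s h hhc).smul hcoef
    have s1 := aux_strong _ (hsum Finset.univ) lam hlam (f S) (hf S) (fminus S i)
    have s2 := aux_strong _ (hsum (Finset.univ.erase i)) lam hlam (fminus S i) (hfminus S i) (f S)
    have e : ∀ g, ∑ i', h i' g = h i g + ∑ i' ∈ Finset.univ.erase i, h i' g := fun g =>
      (Finset.add_sum_erase _ (fun i' => h i' g) (Finset.mem_univ i)).symm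
    rw [e, e, norm_sub_rev] at s1
    set Δ := ‖f S - fminus S i‖ with hΔ
    have hl : h i (fminus S i) - h i (f S) ≤ α * (n' * (τ * (ρ * Δ * (n' * w)))) := by
      rw [hh]; dsimp only
      rw [← Finset.sum_sub_distrib]
      calc _ ≤ ∑ j : Fin α, (n' : ℝ) * (τ * (ρ * Δ * (n' * w))) := by
            refine Finset.sum_le_sum fun j _ => (le_abs_self _).trans ?_
            have := aux_lip d eval ρ τ v hρ hτ hadm cτ hsmooth n' (φ (S i) j)
              (hφbound _ hSi j) (fminus S i) (f S)
            rwa [norm_sub_rev] at this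
        _ = _ := by simp
    have hq : lam * Δ ^ 2 ≤ 1 / ((m : ℝ) * n) * (α * (n' * (τ * (ρ * Δ * (n' * w))))) := by
      have := mul_le_mul_of_nonneg_left hl hcoef
      linarith
    have hq2 : 1 / ((m : ℝ) * n) * (α * (n' * (τ * (ρ * Δ * (n' * w)))))
        = τ * ρ * w * n' / m * Δ := by
      rw [hnn]; field_simp
    rw [hq2] at hq
    have hΔ0 : 0 ≤ Δ := norm_nonneg _
    rcases hΔ0.eq_or_lt with h0 | h0
    · rw [← h0]; positivity
    · have : lam * Δ ≤ τ * ρ * w * n' / m := by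
        have : Δ * (lam * Δ) ≤ Δ * (τ * ρ * w * n' / m) := by linarith
        exact le_of_mul_le_mul_left this h0
      rw [le_div_iff₀ (by positivity)]
      rw [le_div_iff₀ hmR] at this
      linarith
  set β : ℝ := d * τ ^ 2 * ρ ^ 2 * v ^ 2 * n ^ 2 / (m * lam * α) with hβ
  have hβ0 : 0 ≤ β := by positivity
  have hst1 : ∀ (S : Fin m → (Fin n → EuclideanSpace ℝ (Fin d)) × (Fin n → ℝ)) (i : Fin m)
      (z : (Fin n → EuclideanSpace ℝ (Fin d)) × (Fin n → ℝ)), S i ∈ G → z ∈ G →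
      |srSampleLoss d eval cτ n (f S) z - srSampleLoss d eval cτ n (fminus S i) z| ≤ n * β := by
    intro S i z hSi hz
    refine (aux_lip d eval ρ τ v hρ hτ hadm cτ hsmooth n z hz _ _).trans ?_
    calc _ ≤ n * (τ * (ρ * (τ * ρ * w * n' / (m * lam)) * (n * w))) := by
          gcongr
          exact hdist S i hSi
      _ = n * (w ^ 2 * τ ^ 2 * ρ ^ 2 * n * n' / (m * lam)) := by ring
      _ = n * β := by
          rw [hw2, hβ, hnn]; field_simp
  have hres := aux_stab D m hm (fun S z => 1 / (n:ℝ) * srSampleLoss d eval cτ n (f S) z) β γ hβ0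
    (fun S z => by
      have h1 : ∀ k, _ := fun k => hγ S z k
      constructor
      · exact mul_nonneg (by positivity) (Finset.sum_nonneg fun k _ => (h1 k).1)
      · calc _ ≤ 1 / (n:ℝ) * ∑ k : Fin n, γ := by
              gcongr
              exact Finset.sum_le_sum fun k _ => (h1 k).2
          _ = γ := by simp; field_simp)
    G hGm hboundD
    (fun S i z u hS hz hu => by
      have a1 := hst1 S i u (hS i) hu
      have a2 := hst1 (Function.update S i z) i u (by simpa using hz) hu
      rw [hconsist] at a2
      rw [← mul_sub, abs_mul, abs_of_nonneg (by positivity : (0:ℝ) ≤ 1 / n), one_div,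
        inv_mul_le_iff₀ hnR]
      rw [abs_sub_comm] at a1
      have := abs_sub_le (srSampleLoss d eval cτ n (f (Function.update S i z)) u)
        (srSampleLoss d eval cτ n (fminus S i) u) (srSampleLoss d eval cτ n (f S) u)
      linarith)
    (hInt1.const_mul _) (fun i => (hInt2 i).const_mul _) (fun i => (hInt3 i).const_mul _)
    (fun S => (hIntG S).const_mul _)
    (by
      convert! hmeas using 2 with S
      simp only [srGenRisk, srEmpRisk, ← Finset.mul_sum]
      rw [← mul_assoc]
      congr 2
      field_simp)
    δ hδ.1 hδ.2
  refine hres.trans (measure_mono ?_)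
  intro S hS
  rw [Set.mem_ofPred_eq] at hS ⊢
  have hE : srEmpRisk d n m eval cτ (f S) S
      = 1 / (m:ℝ) * ∑ i, 1 / (n:ℝ) * srSampleLoss d eval cτ n (f S) (S i) := by
    simp only [srEmpRisk, ← Finset.mul_sum]
    rw [← mul_assoc]
    congr 1
    field_simp
  have c1 : 2 * (d : ℝ) * τ ^ 2 * ρ ^ 2 * v ^ 2 * (n : ℝ) ^ 2 / ((m : ℝ) * lam * (α : ℝ)) = 2 * β := by
    rw [hβ]; ring
  have c2 : (4 * (m : ℝ) - 2) * (d : ℝ) * τ ^ 2 * ρ ^ 2 * v ^ 2 * (n : ℝ) ^ 2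
      / ((m : ℝ) * lam * (α : ℝ)) = (4 * m - 2) * β := by
    rw [hβ]; ring
  rw [c1, c2, hE]
  unfold srGenRisk
  linarith
end
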